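/- There do not exist rational numbers q₁, q₂, q₃, each lying in the interval (0, 1/2], such that (1/q₁ − 1)·(1/q₂ − 1)·(1/q₃ − 1) = 8 and 2·((1 − 2q₁) + (1 − 2q₂) + (1 − 2q₃)) = 12/5. -/

import Mathlib

/-!
The system has no solution even in positive reals. The degree equation says
`q₁ + q₂ + q₃ = 9/10`; then clearing denominators in the product equation gives
`1/10 + e₂ = 9 e₃`, where `e₂`, `e₃` are the elementary symmetric functions of the `qᵢ`.
But AM-HM, in the form `(q₁ + q₂ + q₃) e₂ ≥ 9 e₃`, yields `9 e₃ ≤ (9/10) e₂ < 1/10 + e₂`.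
-/

/-- There do not exist rationals `q₁, q₂, q₃ ∈ (0, 1/2]` with
`(1/q₁ − 1)(1/q₂ − 1)(1/q₃ − 1) = 8` and `2((1 − 2q₁) + (1 − 2q₂) + (1 − 2q₃)) = 12/5`. -/
theorem stmt10 :
    ¬ ∃ q₁ q₂ q₃ : ℚ, (0 < q₁ ∧ q₁ ≤ 1/2) ∧ (0 < q₂ ∧ q₂ ≤ 1/2) ∧ (0 < q₃ ∧ q₃ ≤ 1/2) ∧
      (1/q₁ - 1) * (1/q₂ - 1) * (1/q₃ - 1) = 8 ∧
      2*((1 - 2*q₁) + (1 - 2*q₂) + (1 - 2*q₃)) = 12/5 := by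
  rintro ⟨a, b, c, ⟨ha, -⟩, ⟨hb, -⟩, ⟨hc, -⟩, hprod, hsum⟩
  have hs : a + b + c = 9/10 := by linarith
  have hp : (1 - a) * (1 - b) * (1 - c) = 8 * (a * b * c) := by
    rw [← hprod]
    field_simp
  have he : 1/10 + (a*b + b*c + c*a) = 9 * (a*b*c) := by linear_combination hp + hs
  have hamhm : 9 * (a*b*c) ≤ (a + b + c) * (a*b + b*c + c*a) := by
    have h₁ : 0 ≤ a * (b - c)^2 := by positivity
    have h₂ : 0 ≤ b * (c - a)^2 := by positivity
    have h₃ : 0 ≤ c * (a - b)^2 := by positivity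
    linarith
  rw [hs] at hamhm
  have hpos : 0 < a*b + b*c + c*a := by positivity
  linarith
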